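/- Let μ be a non-negative Poisson measure on ℝ^d. Then for every continuous compactly supported function ψ : ℝ^d → ℂ, the convolution (μ⋆ψ)(t) = ∫ ψ(t−x) dμ(x) is a Bohr almost periodic function of t ∈ ℝ^d; that is, μ is an almost periodic measure. -/

import Mathlib

open MeasureTheory Metric Filter Topology Complex SchwartzMap Bornology
open scoped RealInnerProductSpace ENNReal

noncomputable section

/-- A continuous function `g` is *Bohr almost periodic* if for every `ε > 0` its set of
`ε`-almost periods is relatively dense. -/
def IsBohrAP {V : Type*} [SeminormedAddCommGroup V] (g : V → ℂ) : Prop :=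
  Continuous g ∧ ∀ ε : ℝ, 0 < ε → ∃ L : ℝ, 0 < L ∧ ∀ x : V, ∃ τ : V,
    dist τ x < L ∧ ∀ y : V, ‖g (y + τ) - g y‖ < ε

/-- A pure point complex measure on `V`, described by its (countably supported) mass function. -/
structure PPM (V : Type*) where
  mass : V → ℂ
  countable : (Function.support mass).Countable

namespace PPM

variable {V : Type*}

/-- The total variation of a pure point measure, evaluated on a set. -/
def var (μ : PPM V) (A : Set V) : ℝ≥0∞ := ∑' x : A, (‖μ.mass x‖₊ : ℝ≥0∞)

/-- Pairing of a pure point measure with a test function: `∫ φ dμ = Σ_x μ{x}·φ(x)`. -/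
def pair (μ : PPM V) (φ : V → ℂ) : ℂ := ∑' x, μ.mass x * φ x

/-- Convolution `(μ ⋆ ψ)(t) = ∫ ψ(t - x) dμ(x)`. -/
def conv [SubtractionMonoid V] (μ : PPM V) (ψ : V → ℂ) (t : V) : ℂ :=
  ∑' x, μ.mass x * ψ (t - x)

/-- A pure point measure is non-negative if each mass is a non-negative real number. -/
def Nonneg (μ : PPM V) : Prop := ∀ x, μ.mass x = (‖μ.mass x‖ : ℂ)

end PPM

/-- Euclidean space `ℝ^d`. -/
abbrev Ed (d : ℕ) := EuclideanSpace ℝ (Fin d)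

variable {d : ℕ}

/-- Local finiteness: the total variation of every ball is finite. -/
def PPM.locFinite (μ : PPM (Ed d)) : Prop := ∀ r : ℝ, μ.var (ball 0 r) < ⊤

/-- The measure is a temperate distribution: it pairs (absolutely) with every Schwartz
function. -/
def PPM.temperate (μ : PPM (Ed d)) : Prop :=
  ∀ φ : SchwartzMap (Ed d) ℂ, Summable fun x => μ.mass x * φ x

/-- `ν` is the distributional Fourier transform of `μ`: `μ(φ̂) = ν(φ)` on test functions. -/
def IsFT (μ ν : PPM (Ed d)) : Prop :=
  ∀ φ : SchwartzMap (Ed d) ℂ, HasCompactSupport φ →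
    μ.pair ⇑(FourierTransform.fourierCLE ℂ (SchwartzMap (Ed d) ℂ) φ) = ν.pair ⇑φ

/-- A Poisson measure: a pure point measure which is a temperate distribution and whose
distributional Fourier transform is a pure point measure. -/
def IsPoisson (μ : PPM (Ed d)) : Prop :=
  μ.locFinite ∧ μ.temperate ∧ ∃ ν : PPM (Ed d), ν.locFinite ∧ IsFT μ ν

/-!
For a bump function `f`, the function `|𝓕 f|²` is the Fourier transform of a test function; it is
non-negative, and positive near the origin. Its convolution with `μ` is an absolutely convergent
trigonometric series, so it is bounded, and the non-negativity of `μ` turns this bound into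
translation boundedness of `μ`.
A trigonometric series with summable coefficients is a continuous function on a compact torus
pulled back along a character, hence Bohr almost periodic. A general `ψ` is a limit of inverse
Fourier transforms of test functions in the norm `sup (1 + ‖y‖) ^ k * |ψ y|`; for `k > d`
translation boundedness makes the convolutions with `μ` converge uniformly, and uniform limits
of almost periodic functions are almost periodic.
-/

open scoped FourierTransform ContDiff

section CompactlySupportedSchwartz

variable {E F : Type*} [NormedAddCommGroup E] [NormedSpace ℝ E] [NormedAddCommGroup F]
  [NormedSpace ℝ F]

lemma norm_pow_mul_norm_iteratedFDeriv_smul_le {g : E → ℝ} (hg : ContDiff ℝ ∞ g) {A R : ℝ} {m : ℕ}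
    (hR : 0 < R) (hA : ∀ i ≤ m, ∀ x, ‖iteratedFDeriv ℝ i g x‖ ≤ A)
    (hg0 : ∀ x ∈ ball 0 R, g x = 0) (f : 𝓢(E, F)) (k : ℕ) (x : E) :
    ‖x‖ ^ k * ‖iteratedFDeriv ℝ m (fun y => g y • f y) x‖ ≤
      A * (∑ i ∈ Finset.range (m + 1), m.choose i * SchwartzMap.seminorm ℝ (k + 1) (m - i) f) /
        R := by
  have hA0 : 0 ≤ A := (norm_nonneg _).trans (hA 0 m.zero_le 0)
  rcases lt_or_ge ‖x‖ R with hx | hx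
  · have hzero : (fun y => g y • f y) =ᶠ[𝓝 x] fun _ => (0 : F) := by
      filter_upwards [isOpen_ball.mem_nhds (mem_ball_zero_iff.2 hx)] with y hy
      rw [hg0 y hy, zero_smul]
    rw [(hzero.iteratedFDeriv ℝ m).eq_of_nhds, iteratedFDeriv_fun_zero, Pi.zero_apply, norm_zero,
      mul_zero]
    positivity
  · rw [le_div_iff₀ hR]
    calc ‖x‖ ^ k * ‖iteratedFDeriv ℝ m (fun y => g y • f y) x‖ * R
        ≤ ‖x‖ ^ k * (∑ i ∈ Finset.range (m + 1), m.choose i * ‖iteratedFDeriv ℝ i g x‖ *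
            ‖iteratedFDeriv ℝ (m - i) f x‖) * ‖x‖ := by
          gcongr
          exact norm_iteratedFDeriv_smul_le hg f.smooth' x (mod_cast le_top)
      _ = ∑ i ∈ Finset.range (m + 1), ‖iteratedFDeriv ℝ i g x‖ *
            (m.choose i * (‖x‖ ^ (k + 1) * ‖iteratedFDeriv ℝ (m - i) f x‖)) := by
          rw [Finset.mul_sum, Finset.sum_mul]
          exact Finset.sum_congr rfl fun i _ => by ring
      _ ≤ ∑ i ∈ Finset.range (m + 1),
            A * (m.choose i * SchwartzMap.seminorm ℝ (k + 1) (m - i) f) := by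
          gcongr with i hi
          · exact hA i (Finset.mem_range_succ_iff.1 hi) x
          · exact SchwartzMap.le_seminorm ℝ _ _ f x
      _ = _ := by rw [← Finset.mul_sum]

lemma exists_bound_iteratedFDeriv_sub_const {g : E → F} (hg : ContDiff ℝ ∞ g)
    (hgs : HasCompactSupport g) (c : F) (m : ℕ) :
    ∃ A, ∀ i ≤ m, ∀ x, ‖iteratedFDeriv ℝ i (fun y => g y - c) x‖ ≤ A := by
  have hbound : ∀ i, ∃ A, ∀ x, ‖iteratedFDeriv ℝ i (fun y => g y - c) x‖ ≤ A := fun i => by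
    obtain ⟨A, hA⟩ := (hgs.iteratedFDeriv (𝕜 := ℝ) i).exists_bound_of_continuous
      (hg.continuous_iteratedFDeriv (m := i) (mod_cast le_top))
    refine ⟨A + ‖c‖, fun x => ?_⟩
    change ‖iteratedFDeriv ℝ i (g - fun _ => c) x‖ ≤ _
    rw [iteratedFDeriv_sub_apply (hg.contDiffAt.of_le (mod_cast le_top)) contDiffAt_const]
    refine (norm_sub_le _ _).trans (add_le_add (hA x) ?_)
    rcases eq_or_ne i 0 with rfl | hi
    · exact norm_iteratedFDeriv_zero.le
    · simp [iteratedFDeriv_const_of_ne hi]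
  choose A hA using hbound
  refine ⟨∑ i ∈ Finset.range (m + 1), A i, fun i hi x => (hA i x).trans ?_⟩
  exact Finset.single_le_sum (fun j _ => (norm_nonneg _).trans (hA j 0))
    (Finset.mem_range_succ_iff.2 hi)

lemma norm_iteratedFDeriv_comp_smul_le {g : E → F} (hg : ContDiff ℝ ∞ g) {a A : ℝ} {i : ℕ}
    (ha : |a| ≤ 1) (hA : ∀ x, ‖iteratedFDeriv ℝ i g x‖ ≤ A) (x : E) :
    ‖iteratedFDeriv ℝ i (fun y => g (a • y)) x‖ ≤ A := by
  rw [congrFun (iteratedFDeriv_comp_const_smul a (hg.of_le (mod_cast le_top))) x, norm_smul,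
    norm_pow, Real.norm_eq_abs]
  exact (mul_le_of_le_one_left (norm_nonneg _) (pow_le_one₀ (abs_nonneg a) ha)).trans (hA _)

lemma tendsto_smulLeftCLM_comp_inv_smul {χ : E → ℝ} (hχ : ContDiff ℝ ∞ χ)
    (hχs : HasCompactSupport χ) (hχ1 : ∀ x ∈ ball 0 1, χ x = 1) (f : 𝓢(E, F)) :
    Tendsto (fun R : ℝ => smulLeftCLM F (fun x => χ (R⁻¹ • x)) f) atTop (𝓝 f) := by
  rw [(schwartz_withSeminorms ℝ E F).tendsto_nhds]
  rintro ⟨k, m⟩ ε hε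
  obtain ⟨A, hA⟩ := exists_bound_iteratedFDeriv_sub_const hχ hχs 1 m
  have hχ' : ContDiff ℝ ∞ fun x => χ x - 1 := hχ.sub contDiff_const
  let M := A * ∑ i ∈ Finset.range (m + 1), m.choose i * SchwartzMap.seminorm ℝ (k + 1) (m - i) f
  have hA0 : 0 ≤ A := (norm_nonneg _).trans (hA 0 m.zero_le 0)
  have hlim : Tendsto (fun R : ℝ => M / R) atTop (𝓝 0) := tendsto_const_nhds.div_atTop tendsto_id
  filter_upwards [hlim.eventually (gt_mem_nhds hε), eventually_ge_atTop 1] with R hMR hR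
  have hR0 : 0 < R := one_pos.trans_le hR
  have hsub : ⇑(smulLeftCLM F (fun x => χ (R⁻¹ • x)) f - f) =
      fun x => (χ (R⁻¹ • x) - 1) • f x := by
    have htemp : (fun x => χ (R⁻¹ • x)).HasTemperateGrowth :=
      (hχs.comp_smul (inv_ne_zero hR0.ne')).hasTemperateGrowth
        (hχ.comp (contDiff_const_smul R⁻¹))
    ext x
    rw [_root_.sub_apply, smulLeftCLM_apply_apply htemp, sub_smul, one_smul]
  refine (SchwartzMap.seminorm_le_bound ℝ k m _ (by positivity) fun x => ?_).trans_lt hMR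
  rw [hsub]
  refine norm_pow_mul_norm_iteratedFDeriv_smul_le (hχ'.comp (contDiff_const_smul R⁻¹)) hR0
    (fun i hi => norm_iteratedFDeriv_comp_smul_le hχ' ?_ (hA i hi)) (fun y hy => ?_) f k x
  · rw [abs_of_nonneg (by positivity)]
    exact inv_le_one_of_one_le₀ hR
  · rw [mem_ball_zero_iff] at hy
    rw [Function.comp_apply, hχ1 _ ?_, sub_self]
    rwa [mem_ball_zero_iff, norm_smul, norm_inv, Real.norm_of_nonneg hR0.le, inv_mul_lt_one₀ hR0]

theorem dense_schwartz_setOf_hasCompactSupport [FiniteDimensional ℝ E] :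
    Dense {f : 𝓢(E, F) | HasCompactSupport f} := by
  intro f
  let χ : ContDiffBump (0 : E) := ⟨1, 2, one_pos, one_lt_two⟩
  refine mem_closure_of_tendsto (tendsto_smulLeftCLM_comp_inv_smul χ.contDiff
    χ.hasCompactSupport (fun x hx => χ.one_of_mem_closedBall (ball_subset_closedBall hx)) f) ?_
  filter_upwards [eventually_gt_atTop 0] with R hR
  have hχR : HasCompactSupport fun x : E => χ (R⁻¹ • x) :=
    χ.hasCompactSupport.comp_smul (inv_ne_zero hR.ne')
  exact hχR.of_isClosed_subset (isClosed_tsupport _)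
    ((tsupport_smulLeftCLM_subset _ f).trans Set.inter_subset_right)

end CompactlySupportedSchwartz

section BohrAlmostPeriodic

lemma IsBohrAP.of_forall_exists_norm_sub_lt {V : Type*} [SeminormedAddCommGroup V] {g : V → ℂ}
    (h : ∀ ε > 0, ∃ f, IsBohrAP f ∧ ∀ t, ‖g t - f t‖ < ε) : IsBohrAP g := by
  refine ⟨?_, fun ε hε => ?_⟩
  · refine continuous_of_uniform_approx_of_continuous fun u hu => ?_
    obtain ⟨ε, hε, hεu⟩ := Metric.mem_uniformity_dist.1 hu
    obtain ⟨f, hf, hgf⟩ := h ε hε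
    exact ⟨f, hf.1, fun t => hεu ((dist_eq_norm _ _).trans_lt (hgf t))⟩
  · obtain ⟨f, hf, hgf⟩ := h (ε / 3) (by positivity)
    obtain ⟨L, hL, hfL⟩ := hf.2 (ε / 3) (by positivity)
    refine ⟨L, hL, fun x => ?_⟩
    obtain ⟨τ, hτ, hfτ⟩ := hfL x
    refine ⟨τ, hτ, fun y => ?_⟩
    calc ‖g (y + τ) - g y‖
        = ‖(g (y + τ) - f (y + τ)) + (f (y + τ) - f y) - (g y - f y)‖ := by ring_nf
      _ ≤ ‖g (y + τ) - f (y + τ)‖ + ‖f (y + τ) - f y‖ + ‖g y - f y‖ :=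
          (norm_sub_le _ _).trans (by gcongr; exact norm_add_le _ _)
      _ < ε / 3 + ε / 3 + ε / 3 := by gcongr <;> apply_assumption
      _ = ε := by ring

-- Finitely many translates of a neighbourhood of `1` cover the compact group; the differences
-- `x - τ`, with `τ` ranging over finitely many representatives, are almost periods.
lemma IsBohrAP.comp_addChar {V K : Type*} [SeminormedAddCommGroup V] [CommGroup K] [UniformSpace K]
    [IsUniformGroup K] [CompactSpace K] {G : K → ℂ} (hG : Continuous G) {Φ : AddChar V K}
    (hΦ : Continuous Φ) : IsBohrAP (G ∘ Φ) := by
  refine ⟨hG.comp hΦ, fun ε hε => ?_⟩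
  have hunif : {p : K × K | dist (G p.1) (G p.2) < ε} ∈ uniformity K :=
    CompactSpace.uniformContinuous_of_continuous hG (Metric.dist_mem_uniformity hε)
  rw [uniformity_eq_comap_nhds_one, mem_comap] at hunif
  obtain ⟨U, hU, hUG⟩ := hunif
  have hV : {p : K × K | p.2 / p.1 ∈ U} ∈ uniformity K := by
    rw [uniformity_eq_comap_nhds_one]
    exact preimage_mem_comap hU
  have htot : TotallyBounded (Φ '' Set.univ) :=
    isCompact_univ.totallyBounded.subset (Set.subset_univ _)
  obtain ⟨S, -, hSfin, hS⟩ := Set.exists_subset_image_finite_and.1 (htot.exists_subset hV)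
  obtain ⟨L, hL, hSL⟩ := hSfin.isBounded.exists_pos_norm_lt
  refine ⟨L, hL, fun x => ?_⟩
  obtain ⟨_, ⟨s, hs, rfl⟩, hxs⟩ := Set.mem_iUnion₂.1 (hS ⟨x, Set.mem_univ x, rfl⟩)
  refine ⟨x - s, ?_, fun y => ?_⟩
  · rw [dist_eq_norm, sub_sub_cancel_left, norm_neg]
    exact hSL s hs
  · rw [← dist_eq_norm]
    refine hUG (a := (Φ (y + (x - s)), Φ y)) ?_
    have : Φ y / Φ (y + (x - s)) = Φ s / Φ x := by
      rw [← AddChar.map_sub_eq_div, ← AddChar.map_sub_eq_div]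
      congr 1
      abel
    rwa [Set.mem_preimage, this]

lemma isBohrAP_tsum_addChar {V ι : Type*} [SeminormedAddCommGroup V] {c : ι → ℂ}
    (hc : Summable fun i => ‖c i‖) {χ : ι → AddChar V Circle} (hχ : ∀ i, Continuous (χ i)) :
    IsBohrAP fun t => ∑' i, c i * χ i t := by
  let Φ : AddChar V (ι → Circle) :=
    ⟨fun t i => χ i t, funext fun i => (χ i).map_zero_eq_one,
      fun s t => funext fun i => (χ i).map_add_eq_mul s t⟩
  let G : (ι → Circle) → ℂ := fun z => ∑' i, c i * z i
  have hG : Continuous G := continuous_tsum (fun i => by fun_prop) hc fun i z => by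
    rw [norm_mul, Circle.norm_coe, mul_one]
  exact IsBohrAP.comp_addChar hG (Φ := Φ) (continuous_pi hχ)

end BohrAlmostPeriodic

section FourierTransform

variable {E : Type*} [NormedAddCommGroup E] [InnerProductSpace ℝ E]

lemma contDiff_fourierChar_inner (t : E) :
    ContDiff ℝ ∞ fun s : E => (𝐞 (inner ℝ s t) : ℂ) := by
  simp only [Real.fourierChar_apply]
  have hinner : ContDiff ℝ ∞ fun s : E => ((2 * Real.pi * inner ℝ s t : ℝ) : ℂ) :=
    Complex.ofRealCLM.contDiff.comp (contDiff_const.mul (contDiff_id.inner ℝ contDiff_const))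
  exact (hinner.mul contDiff_const).cexp

variable [FiniteDimensional ℝ E] [MeasurableSpace E] [BorelSpace E]

lemma exists_fourier_eq_fourierInv_sub {φ : 𝓢(E, ℂ)} (hφ : HasCompactSupport φ) (t : E) :
    ∃ φt : 𝓢(E, ℂ), HasCompactSupport φt ∧ (∀ s, φt s = 𝐞 (inner ℝ s t) * φ s) ∧
      ∀ x, 𝓕 φt x = 𝓕⁻ φ (t - x) := by
  have hs : HasCompactSupport fun s : E => (𝐞 (inner ℝ s t) : ℂ) * φ s := hφ.mul_left
  refine ⟨hs.toSchwartzMap ((contDiff_fourierChar_inner t).mul φ.smooth'), hs, fun s => rfl,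
    fun x => ?_⟩
  rw [SchwartzMap.fourier_coe, SchwartzMap.fourierInv_coe, Real.fourier_eq, Real.fourierInv_eq]
  refine integral_congr_ae (Eventually.of_forall fun s => ?_)
  change 𝐞 (-inner ℝ s x) • ((𝐞 (inner ℝ s t) : ℂ) * φ s) = 𝐞 (inner ℝ s (t - x)) • φ s
  rw [Circle.smul_def, Circle.smul_def, smul_eq_mul, smul_eq_mul, ← mul_assoc, ← Circle.coe_mul,
    ← AddChar.map_add_eq_mul, inner_sub_right, neg_add_eq_sub]

lemma fourier_conj_comp_neg (f : E → ℂ) (ξ : E) :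
    𝓕 (fun x => starRingEnd ℂ (f (-x))) ξ = starRingEnd ℂ (𝓕 f ξ) := by
  rw [Real.fourier_eq, Real.fourier_eq, ← integral_conj, ← integral_neg_eq_self]
  refine integral_congr_ae (Eventually.of_forall fun x => ?_)
  simp only [inner_neg_left, neg_neg, Circle.smul_def, smul_eq_mul, map_mul,
    ← Circle.coe_inv_eq_conj, ← AddChar.map_neg_eq_inv]

lemma exists_fourier_eq_norm_sq {f : 𝓢(E, ℂ)} (hf : HasCompactSupport f) :
    ∃ φ : 𝓢(E, ℂ), HasCompactSupport φ ∧ ∀ ξ, 𝓕 φ ξ = (‖𝓕 f ξ‖ : ℂ) ^ 2 := by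
  have hs : HasCompactSupport fun x => starRingEnd ℂ (f (-x)) :=
    (hf.comp_homeomorph (Homeomorph.neg E)).comp_left (map_zero _)
  let f' : 𝓢(E, ℂ) := hs.toSchwartzMap
    (Complex.conjCLE.contDiff.comp (f.smooth'.comp contDiff_neg))
  refine ⟨SchwartzMap.convolution (ContinuousLinearMap.mul ℂ ℂ) f f', ?_, fun ξ => ?_⟩
  · rw [funext (SchwartzMap.convolution_apply (ContinuousLinearMap.mul ℂ ℂ) f f')]
    exact hf.convolution _ hs
  · rw [SchwartzMap.fourier_convolution, SchwartzMap.pairing_apply_apply,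
      ContinuousLinearMap.mul_apply', ← Complex.mul_conj']
    congr 1
    rw [SchwartzMap.fourier_coe, SchwartzMap.fourier_coe]
    exact fourier_conj_comp_neg f ξ

lemma exists_fourierInv_eq_norm :
    ∃ φ : 𝓢(E, ℂ), HasCompactSupport φ ∧ 𝓕⁻ φ 0 ≠ 0 ∧ ∀ x, 𝓕⁻ φ x = ‖𝓕⁻ φ x‖ := by
  let b : ContDiffBump (0 : E) := ⟨1, 2, one_pos, one_lt_two⟩
  have hbs : HasCompactSupport fun x => (b x : ℂ) := b.hasCompactSupport.comp_left ofReal_zero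
  let f : 𝓢(E, ℂ) := hbs.toSchwartzMap (Complex.ofRealCLM.contDiff.comp b.contDiff)
  have hf0 : 𝓕 f 0 ≠ 0 := by
    rw [SchwartzMap.fourier_coe, Real.fourier_eq]
    simp only [inner_zero_right, neg_zero, AddChar.map_zero_eq_one, one_smul]
    change ∫ x, (b x : ℂ) ≠ 0
    rw [integral_complex_ofReal]
    exact ofReal_ne_zero.2 (b.integral_pos (μ := volume)).ne'
  obtain ⟨φ, hφs, hφ⟩ := exists_fourier_eq_norm_sq (f := f) hbs
  have hinv : ∀ x, 𝓕⁻ φ x = ((‖𝓕 f (-x)‖ ^ 2 : ℝ) : ℂ) := fun x => by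
    rw [SchwartzMap.fourierInv_coe, Real.fourierInv_eq_fourier_neg, ← SchwartzMap.fourier_coe, hφ,
      ofReal_pow]
  refine ⟨φ, hφs, ?_, fun x => ?_⟩
  · rw [hinv, neg_zero]
    exact ofReal_ne_zero.2 (pow_ne_zero 2 (norm_ne_zero_iff.2 hf0))
  · rw [hinv, norm_real, norm_pow, norm_norm]

end FourierTransform

section TranslationBounded

/-- A pure point measure is *translation bounded* if the total variations of the balls of some
fixed positive radius are uniformly bounded; in a finite-dimensional space every radius then works.
Its convolution with a function of fast decay is bounded by a weighted supremum norm. -/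
def PPM.TranslationBounded {V : Type*} [PseudoMetricSpace V] (μ : PPM V) : Prop :=
  ∃ r > 0, ⨆ t, μ.var (ball t r) < ⊤

lemma PPM.var_eq_tsum_indicator {V : Type*} (μ : PPM V) (A : Set V) :
    μ.var A = ∑' x : Function.support μ.mass, A.indicator (fun y => ‖μ.mass y‖ₑ) x := by
  have hsupp : Function.support (A.indicator fun y => ‖μ.mass y‖ₑ) ⊆ Function.support μ.mass :=
    fun x hx h => hx (Set.indicator_apply_eq_zero.2 fun _ => by rw [h, enorm_zero])
  exact (tsum_subtype A _).trans (tsum_subtype_eq_of_support_subset hsupp).symm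

variable {E : Type*} [NormedAddCommGroup E]

lemma PPM.lintegral_mul_var_ball [MeasurableSpace E] [BorelSpace E] (μ : PPM E) (m : Measure E)
    {w : E → ℝ≥0∞} (hw : Measurable w) (t : E) (r : ℝ) :
    ∫⁻ z, w z * μ.var (ball (t - z) r) ∂m =
      ∑' x : Function.support μ.mass, ‖μ.mass x‖ₑ * ∫⁻ z in ball (t - x) r, w z ∂m := by
  have : Countable (Function.support μ.mass) := μ.countable
  have hterm : ∀ z x, w z * (ball (t - z) r).indicator (fun y => ‖μ.mass y‖ₑ) x =
      ‖μ.mass x‖ₑ * (ball (t - x) r).indicator w z := fun z x => by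
    have hmem : x ∈ ball (t - z) r ↔ z ∈ ball (t - x) r := by
      rw [mem_ball_iff_norm, mem_ball_iff_norm]
      congr! 2
      abel
    by_cases hx : z ∈ ball (t - x) r
    · rw [Set.indicator_of_mem hx, Set.indicator_of_mem (hmem.2 hx), mul_comm]
    · rw [Set.indicator_of_notMem hx, Set.indicator_of_notMem (mt hmem.1 hx), mul_zero, mul_zero]
  simp only [μ.var_eq_tsum_indicator, ← ENNReal.tsum_mul_left, hterm]
  rw [lintegral_tsum fun x => ((hw.indicator measurableSet_ball).const_mul _).aemeasurable]
  refine tsum_congr fun x => ?_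
  rw [lintegral_const_mul _ (hw.indicator measurableSet_ball),
    lintegral_indicator measurableSet_ball]

lemma one_add_norm_rpow_neg_le_of_mem_ball {k r : ℝ} (hk : 0 ≤ k) {y z : E}
    (hz : z ∈ ball y r) : (1 + ‖y‖) ^ (-k) ≤ (1 + r) ^ k * (1 + ‖z‖) ^ (-k) := by
  have hr : 0 < r := pos_of_mem_ball hz
  have hzy : 1 + ‖z‖ ≤ (1 + r) * (1 + ‖y‖) := by
    have := norm_lt_of_mem_ball hz
    nlinarith [norm_nonneg y]
  rw [Real.rpow_neg (by positivity), Real.rpow_neg (by positivity), ← div_eq_mul_inv,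
    inv_le_iff_one_le_mul₀' (by positivity), ← mul_div_assoc, one_le_div (by positivity),
    ← Real.mul_rpow (by positivity) (by positivity), mul_comm]
  exact Real.rpow_le_rpow (by positivity) hzy hk

lemma ofReal_one_add_norm_rpow_neg_mul_measure_ball_le [MeasurableSpace E] [BorelSpace E]
    (m : Measure E) [m.IsAddHaarMeasure] {k : ℝ} (hk : 0 ≤ k) (y : E) (r : ℝ) :
    ENNReal.ofReal ((1 + ‖y‖) ^ (-k)) * m (ball 0 r) ≤
      ENNReal.ofReal ((1 + r) ^ k) * ∫⁻ z in ball y r, ENNReal.ofReal ((1 + ‖z‖) ^ (-k)) ∂m := by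
  have hw : Measurable fun z : E => ENNReal.ofReal ((1 + ‖z‖) ^ (-k)) := by fun_prop
  rw [← Measure.addHaar_ball_center m y, ← setLIntegral_const, ← lintegral_const_mul _ hw]
  refine setLIntegral_mono (hw.const_mul _) fun z hz => ?_
  have hr : 0 < r := pos_of_mem_ball hz
  rw [← ENNReal.ofReal_mul (by positivity)]
  exact ENNReal.ofReal_le_ofReal (one_add_norm_rpow_neg_le_of_mem_ball hk hz)

variable [NormedSpace ℝ E] [FiniteDimensional ℝ E]

lemma PPM.TranslationBounded.iSup_tsum_one_add_norm_lt_top {μ : PPM E} (hμ : μ.TranslationBounded)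
    {k : ℝ} (hk : Module.finrank ℝ E < k) :
    ⨆ t, ∑' x, ‖μ.mass x‖ₑ * ENNReal.ofReal ((1 + ‖t - x‖) ^ (-k)) < ⊤ := by
  borelize E
  obtain ⟨r, hr, hC⟩ := hμ
  let m : Measure E := Measure.addHaar
  let w : E → ℝ≥0∞ := fun y => ENNReal.ofReal ((1 + ‖y‖) ^ (-k))
  have hw : Measurable w := by fun_prop
  have hsum : ∀ t, (∑' x, ‖μ.mass x‖ₑ * w (t - x)) * m (ball 0 r) ≤
      ENNReal.ofReal ((1 + r) ^ k) * ((∫⁻ z, w z ∂m) * ⨆ t, μ.var (ball t r)) := fun t => by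
    have hsupp : (Function.support fun x => ‖μ.mass x‖ₑ * w (t - x)) ⊆ Function.support μ.mass :=
      fun x hx h => hx (by simp only [h, enorm_zero, zero_mul])
    rw [← tsum_subtype_eq_of_support_subset hsupp, ← ENNReal.tsum_mul_right]
    calc ∑' x : Function.support μ.mass, ‖μ.mass x‖ₑ * w (t - x) * m (ball 0 r)
        ≤ ∑' x : Function.support μ.mass, ENNReal.ofReal ((1 + r) ^ k) *
            (‖μ.mass x‖ₑ * ∫⁻ z in ball (t - x) r, w z ∂m) := by
          refine ENNReal.tsum_le_tsum fun x => ?_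
          rw [mul_assoc, mul_left_comm (ENNReal.ofReal _)]
          gcongr ‖μ.mass x‖ₑ * ?_
          exact ofReal_one_add_norm_rpow_neg_mul_measure_ball_le m
            ((Nat.cast_nonneg _).trans hk.le) _ _
      _ = ENNReal.ofReal ((1 + r) ^ k) * ∫⁻ z, w z * μ.var (ball (t - z) r) ∂m := by
          rw [ENNReal.tsum_mul_left, μ.lintegral_mul_var_ball m hw]
      _ ≤ _ := by
          rw [← lintegral_mul_const _ hw]
          gcongr with z
          exact le_iSup (fun t => μ.var (ball t r)) (t - z)
  refine (iSup_le fun t => (ENNReal.le_div_iff_mul_le (Or.inl (measure_ball_pos m 0 hr).ne')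
    (Or.inl measure_ball_lt_top.ne)).2 (hsum t)).trans_lt (ENNReal.div_lt_top ?_
      (measure_ball_pos m 0 hr).ne')
  exact ENNReal.mul_ne_top ENNReal.ofReal_ne_top
    (ENNReal.mul_ne_top (finite_integral_one_add_norm hk).ne hC.ne)

theorem PPM.TranslationBounded.exists_norm_conv_le {μ : PPM E} (hμ : μ.TranslationBounded) {k : ℕ}
    (hk : Module.finrank ℝ E < k) :
    ∃ C, 0 ≤ C ∧ ∀ (F : E → ℂ) (A : ℝ), (∀ y, (1 + ‖y‖) ^ k * ‖F y‖ ≤ A) → ∀ t,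
      (Summable fun x => μ.mass x * F (t - x)) ∧ ‖μ.conv F t‖ ≤ C * A := by
  have hS := hμ.iSup_tsum_one_add_norm_lt_top (k := k) (mod_cast hk)
  set S := ⨆ t, ∑' x, ‖μ.mass x‖ₑ * ENNReal.ofReal ((1 + ‖t - x‖) ^ (-(k : ℝ)))
  refine ⟨S.toReal, ENNReal.toReal_nonneg, fun F A hF t => ?_⟩
  have hA : 0 ≤ A := le_trans (by positivity) (hF 0)
  have hdecay : ∀ y, ‖F y‖ₑ ≤ ENNReal.ofReal ((1 + ‖y‖) ^ (-(k : ℝ))) * ENNReal.ofReal A :=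
    fun y => by
      rw [← ofReal_norm, ← ENNReal.ofReal_mul (by positivity), Real.rpow_neg (by positivity),
        Real.rpow_natCast]
      exact ENNReal.ofReal_le_ofReal ((le_inv_mul_iff₀ (by positivity)).2 (hF y))
  have hsum : ∑' x, ‖μ.mass x * F (t - x)‖ₑ ≤ S * ENNReal.ofReal A := by
    calc ∑' x, ‖μ.mass x * F (t - x)‖ₑ
        ≤ ∑' x, ‖μ.mass x‖ₑ * ENNReal.ofReal ((1 + ‖t - x‖) ^ (-(k : ℝ))) *
            ENNReal.ofReal A := by
          refine ENNReal.tsum_le_tsum fun x => ?_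
          rw [enorm_mul, mul_assoc]
          gcongr
          exact hdecay _
      _ ≤ S * ENNReal.ofReal A := by
          rw [ENNReal.tsum_mul_right]
          gcongr
          exact le_iSup (fun t => ∑' x, ‖μ.mass x‖ₑ *
            ENNReal.ofReal ((1 + ‖t - x‖) ^ (-(k : ℝ)))) t
  have htop : S * ENNReal.ofReal A ≠ ⊤ := ENNReal.mul_ne_top hS.ne ENNReal.ofReal_ne_top
  refine ⟨(tsum_enorm_ne_top_iff_summable_norm.1 (hsum.trans_lt htop.lt_top).ne).of_norm, ?_⟩
  rw [← toReal_enorm, ← ENNReal.toReal_ofReal hA, ← ENNReal.toReal_mul]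
  exact ENNReal.toReal_mono htop (enorm_tsum_le_tsum_enorm.trans hsum)

end TranslationBounded

section WeightedApproximation

variable {E F : Type*} [NormedAddCommGroup E] [NormedSpace ℝ E] [NormedAddCommGroup F]
  [NormedSpace ℝ F]

lemma exists_schwartz_one_add_norm_pow_mul_norm_sub_le [FiniteDimensional ℝ E]
    {ψ : E → F} (hc : Continuous ψ) (hs : HasCompactSupport ψ) (k : ℕ) {ε : ℝ} (hε : 0 < ε) :
    ∃ g : 𝓢(E, F), ∀ y, (1 + ‖y‖) ^ k * ‖ψ y - g y‖ ≤ ε := by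
  obtain ⟨g, hg, hgψ, hsupp⟩ := hc.exists_contDiff_approx ⊤ (ε := fun y => ε / (1 + ‖y‖) ^ k)
    (continuous_const.div (by fun_prop) fun y => by positivity) (fun y => by positivity)
  refine ⟨(hs.mono hsupp).toSchwartzMap hg, fun y => ?_⟩
  rw [mul_comm, ← le_div_iff₀ (by positivity), ← dist_eq_norm, dist_comm]
  exact (hgψ y).le

lemma exists_mem_one_add_norm_pow_mul_norm_sub_le {S : Set 𝓢(E, F)} (hS : Dense S)
    (g : 𝓢(E, F)) (k : ℕ) {ε : ℝ} (hε : 0 < ε) : ∃ f ∈ S, ∀ y, (1 + ‖y‖) ^ k * ‖g y - f y‖ ≤ ε := by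
  let p : Seminorm ℝ 𝓢(E, F) := (Finset.Iic (k, 0)).sup fun m => SchwartzMap.seminorm ℝ m.1 m.2
  have hball : p.ball g (ε / 2 ^ k) ∈ 𝓝 g :=
    ((schwartz_withSeminorms ℝ E F).mem_nhds_iff g _).2
      ⟨Finset.Iic (k, 0), ε / 2 ^ k, by positivity, subset_rfl⟩
  obtain ⟨f, hfS, hfball⟩ := hS.inter_nhds_nonempty hball
  refine ⟨f, hfS, fun y => ?_⟩
  calc (1 + ‖y‖) ^ k * ‖g y - f y‖ = (1 + ‖y‖) ^ k * ‖iteratedFDeriv ℝ 0 (f - g) y‖ := by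
        rw [norm_iteratedFDeriv_zero, _root_.sub_apply, norm_sub_rev]
    _ ≤ 2 ^ k * p (f - g) :=
        SchwartzMap.one_add_le_sup_seminorm_apply (m := (k, 0)) le_rfl le_rfl _ y
    _ ≤ ε := by
        rw [mul_comm, ← le_div_iff₀ (by positivity)]
        exact (p.mem_ball.1 hfball).le

end WeightedApproximation

section FourierApproximation

variable {E : Type*} [NormedAddCommGroup E] [InnerProductSpace ℝ E] [FiniteDimensional ℝ E]
  [MeasurableSpace E] [BorelSpace E]

lemma dense_fourierInv_image_setOf_hasCompactSupport :
    Dense ((fun φ => 𝓕⁻ φ : 𝓢(E, ℂ) → 𝓢(E, ℂ)) '' {φ | HasCompactSupport φ}) :=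
  (FourierTransform.fourierCLE ℂ 𝓢(E, ℂ)).symm.surjective.denseRange.dense_image
    (FourierTransform.fourierCLE ℂ 𝓢(E, ℂ)).symm.continuous dense_schwartz_setOf_hasCompactSupport

lemma exists_one_add_norm_pow_mul_norm_sub_fourierInv_le {ψ : E → ℂ} (hc : Continuous ψ)
    (hs : HasCompactSupport ψ) (k : ℕ) {ε : ℝ} (hε : 0 < ε) :
    ∃ φ : 𝓢(E, ℂ), HasCompactSupport φ ∧ ∀ y, (1 + ‖y‖) ^ k * ‖ψ y - 𝓕⁻ φ y‖ ≤ ε := by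
  obtain ⟨g, hg⟩ := exists_schwartz_one_add_norm_pow_mul_norm_sub_le hc hs k (half_pos hε)
  obtain ⟨_, ⟨φ, hφ, rfl⟩, hgφ⟩ := exists_mem_one_add_norm_pow_mul_norm_sub_le
    dense_fourierInv_image_setOf_hasCompactSupport g k (half_pos hε)
  refine ⟨φ, hφ, fun y => ?_⟩
  calc (1 + ‖y‖) ^ k * ‖ψ y - 𝓕⁻ φ y‖
      ≤ (1 + ‖y‖) ^ k * (‖ψ y - g y‖ + ‖g y - 𝓕⁻ φ y‖) := by
        gcongr
        exact norm_sub_le_norm_sub_add_norm_sub _ _ _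
    _ ≤ ε / 2 + ε / 2 := (mul_add _ _ _).trans_le (add_le_add (hg y) (hgφ y))
    _ = ε := add_halves ε

end FourierApproximation

section PoissonMeasures

variable {μ ν : PPM (Ed d)}

lemma PPM.locFinite.summable_norm_mass_mul (hν : ν.locFinite) {f : Ed d → ℂ} (hf : Continuous f)
    (hfs : HasCompactSupport f) : Summable fun s => ‖ν.mass s * f s‖ := by
  obtain ⟨B, hB⟩ := hfs.exists_bound_of_continuous hf
  obtain ⟨r, hr⟩ := hfs.isCompact.isBounded.subset_ball 0
  have hball : Summable fun x : ball (0 : Ed d) r => ‖ν.mass x‖ :=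
    ENNReal.tsum_coe_ne_top_iff_summable_coe.1 (hν r).ne
  have hind := (summable_subtype_iff_indicator (f := fun x => ‖ν.mass x‖)).1 hball
  refine (hind.mul_right B).of_nonneg_of_le (fun _ => norm_nonneg _) fun s => ?_
  by_cases hs : s ∈ ball (0 : Ed d) r
  · rw [Set.indicator_of_mem hs, norm_mul]
    gcongr
    exact hB s
  · rw [image_eq_zero_of_notMem_tsupport fun h => hs (hr h), Set.indicator_of_notMem hs, mul_zero,
      norm_zero, zero_mul]

lemma PPM.temperate.summable_conv (hμ : μ.temperate) (φ : 𝓢(Ed d, ℂ)) (t : Ed d) :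
    Summable fun x => μ.mass x * φ (t - x) := by
  refine (hμ (SchwartzMap.compSubConstCLM ℂ t
    (SchwartzMap.compCLMOfContinuousLinearEquiv ℂ (ContinuousLinearEquiv.neg ℝ) φ))).congr
    fun x => ?_
  rw [SchwartzMap.compSubConstCLM_apply, SchwartzMap.compCLMOfContinuousLinearEquiv_apply,
    Function.comp_apply, ContinuousLinearEquiv.neg_apply, neg_sub]

lemma PPM.conv_sub {V : Type*} [SubtractionMonoid V] {μ : PPM V} {f g : V → ℂ} {t : V}
    (hf : Summable fun x => μ.mass x * f (t - x)) (hg : Summable fun x => μ.mass x * g (t - x)) :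
    μ.conv (f - g) t = μ.conv f t - μ.conv g t := by
  simp only [PPM.conv, Pi.sub_apply, mul_sub, hf.tsum_sub hg]

lemma PPM.Nonneg.norm_conv {V : Type*} [SubtractionMonoid V] {μ : PPM V} (hμ : μ.Nonneg)
    {f : V → ℂ} (hf : ∀ y, f y = ‖f y‖) (t : V) :
    ‖μ.conv f t‖ = ∑' x, ‖μ.mass x * f (t - x)‖ := by
  have hterm : ∀ x, μ.mass x * f (t - x) = (‖μ.mass x * f (t - x)‖ : ℂ) := fun x => by
    rw [norm_mul, ofReal_mul, ← hμ x, ← hf (t - x)]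
  rw [PPM.conv, tsum_congr hterm, ← ofReal_tsum, norm_real,
    Real.norm_of_nonneg (tsum_nonneg fun _ => norm_nonneg _)]

lemma IsFT.conv_fourierInv (hF : IsFT μ ν) {φ : 𝓢(Ed d, ℂ)} (hφ : HasCompactSupport φ)
    (t : Ed d) :
    μ.conv (𝓕⁻ φ : 𝓢(Ed d, ℂ)) t = ∑' s, ν.mass s * φ s * 𝐞 (inner ℝ s t) := by
  obtain ⟨φt, hφts, hφt, hfourier⟩ := exists_fourier_eq_fourierInv_sub hφ t
  calc μ.conv (𝓕⁻ φ : 𝓢(Ed d, ℂ)) t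
      = μ.pair (𝓕 φt : 𝓢(Ed d, ℂ)) := tsum_congr fun x => by rw [hfourier]
    _ = ν.pair φt := hF φt hφts
    _ = _ := tsum_congr fun s => by rw [hφt]; ring

lemma IsFT.isBohrAP_conv_fourierInv (hF : IsFT μ ν) (hν : ν.locFinite) {φ : 𝓢(Ed d, ℂ)}
    (hφ : HasCompactSupport φ) : IsBohrAP (μ.conv (𝓕⁻ φ : 𝓢(Ed d, ℂ))) := by
  rw [funext (hF.conv_fourierInv hφ)]
  exact isBohrAP_tsum_addChar (hν.summable_norm_mass_mul φ.continuous hφ)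
    (χ := fun s => Real.fourierChar.compAddMonoidHom (innerₛₗ ℝ s).toAddMonoidHom)
    fun s => Real.continuous_fourierChar.comp (continuous_const.inner continuous_id)

lemma IsFT.norm_conv_fourierInv_le (hF : IsFT μ ν) (hν : ν.locFinite) {φ : 𝓢(Ed d, ℂ)}
    (hφ : HasCompactSupport φ) (t : Ed d) :
    ‖μ.conv (𝓕⁻ φ : 𝓢(Ed d, ℂ)) t‖ ≤ ∑' s, ‖ν.mass s * φ s‖ := by
  have hterm : ∀ s, ‖ν.mass s * φ s * (𝐞 (inner ℝ s t) : ℂ)‖ = ‖ν.mass s * φ s‖ := fun s => by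
    rw [norm_mul, Circle.norm_coe, mul_one]
  rw [hF.conv_fourierInv hφ, ← tsum_congr hterm]
  exact norm_tsum_le_tsum_norm
    ((hν.summable_norm_mass_mul φ.continuous hφ).congr fun s => (hterm s).symm)

theorem IsFT.translationBounded (hF : IsFT μ ν) (hpos : μ.Nonneg) (hT : μ.temperate)
    (hν : ν.locFinite) : μ.TranslationBounded := by
  obtain ⟨φ, hφ, hφ0, hnorm⟩ := exists_fourierInv_eq_norm (E := Ed d)
  let c := ‖𝓕⁻ φ 0‖ / 2
  let M := ∑' s, ‖ν.mass s * φ s‖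
  have hc : 0 < c := half_pos (norm_pos_iff.2 hφ0)
  obtain ⟨r, hr, hball⟩ := Metric.eventually_nhds_iff_ball.1
    ((𝓕⁻ φ).continuous.norm.continuousAt.eventually_const_lt (half_lt_self (norm_pos_iff.2 hφ0)))
  have hvar : ∀ t, μ.var (ball t r) * ENNReal.ofReal c ≤ ENNReal.ofReal M := fun t => by
    have hsum := (hT.summable_conv (𝓕⁻ φ) t).norm
    calc μ.var (ball t r) * ENNReal.ofReal c
        ≤ ∑' x : ball t r, ‖μ.mass x * 𝓕⁻ φ (t - x)‖ₑ := by
          rw [PPM.var, ← ENNReal.tsum_mul_right]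
          refine ENNReal.tsum_le_tsum fun x => ?_
          rw [enorm_mul, ← ofReal_norm (𝓕⁻ φ (t - x))]
          gcongr
          · exact le_rfl
          · exact (hball _ (by rw [mem_ball_zero_iff, ← mem_ball_iff_norm']; exact x.2)).le
      _ ≤ ∑' x, ‖μ.mass x * 𝓕⁻ φ (t - x)‖ₑ :=
          ENNReal.tsum_comp_le_tsum_of_injective Subtype.val_injective _
      _ = ENNReal.ofReal ‖μ.conv (𝓕⁻ φ : 𝓢(Ed d, ℂ)) t‖ := by
          rw [hpos.norm_conv hnorm, ENNReal.ofReal_tsum_of_nonneg (fun _ => norm_nonneg _) hsum]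
          simp only [ofReal_norm]
      _ ≤ ENNReal.ofReal M := ENNReal.ofReal_le_ofReal (hF.norm_conv_fourierInv_le hν hφ t)
  have hc' : ENNReal.ofReal c ≠ 0 := (ENNReal.ofReal_pos.2 hc).ne'
  exact ⟨r, hr, (iSup_le fun t => (ENNReal.le_div_iff_mul_le (Or.inl hc')
    (Or.inl ENNReal.ofReal_ne_top)).2 (hvar t)).trans_lt
      (ENNReal.div_lt_top ENNReal.ofReal_ne_top hc')⟩

theorem PPM.TranslationBounded.isBohrAP_conv (hμ : μ.TranslationBounded) (hT : μ.temperate)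
    (hν : ν.locFinite) (hF : IsFT μ ν) {ψ : Ed d → ℂ} (hc : Continuous ψ)
    (hs : HasCompactSupport ψ) :
    (∀ t, Summable fun x => μ.mass x * ψ (t - x)) ∧ IsBohrAP (μ.conv ψ) := by
  obtain ⟨C, hC, hbound⟩ := hμ.exists_norm_conv_le (Nat.lt_succ_self _)
  have happrox : ∀ ε > 0, ∃ φ : 𝓢(Ed d, ℂ), HasCompactSupport φ ∧
      ∀ t, (Summable fun x => μ.mass x * ψ (t - x)) ∧
        ‖μ.conv ψ t - μ.conv (𝓕⁻ φ : 𝓢(Ed d, ℂ)) t‖ < ε := fun ε hε => by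
    obtain ⟨φ, hφ, hψφ⟩ := exists_one_add_norm_pow_mul_norm_sub_fourierInv_le hc hs
      (Module.finrank ℝ (Ed d) + 1) (div_pos hε (add_pos_of_nonneg_of_pos hC one_pos))
    refine ⟨φ, hφ, fun t => ?_⟩
    obtain ⟨hsum, hle⟩ := hbound _ _ hψφ t
    have hsumφ := hT.summable_conv (𝓕⁻ φ) t
    have hsumψ : Summable fun x => μ.mass x * ψ (t - x) :=
      (hsum.add hsumφ).congr fun x => by ring
    refine ⟨hsumψ, ?_⟩
    rw [← PPM.conv_sub hsumψ hsumφ]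
    refine hle.trans_lt ?_
    rw [← mul_div_assoc, div_lt_iff₀ (add_pos_of_nonneg_of_pos hC one_pos)]
    linarith
  refine ⟨fun t => ?_, .of_forall_exists_norm_sub_lt fun ε hε => ?_⟩
  · obtain ⟨φ, -, hφ⟩ := happrox 1 one_pos
    exact (hφ t).1
  · obtain ⟨φ, hφs, hφ⟩ := happrox ε hε
    exact ⟨_, hF.isBohrAP_conv_fourierInv hν hφs, fun t => (hφ t).2⟩

end PoissonMeasures

/-- For a non-negative Poisson measure `μ` on `ℝ^d` and every continuous
compactly supported `ψ`, the convolution `(μ ⋆ ψ)(t) = ∫ ψ(t-x) dμ(x)` is well defined and is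
a Bohr almost periodic function of `t`; that is, `μ` is an almost periodic measure. -/
theorem statement0 {d : ℕ} (μ : PPM (Ed d)) (hpos : μ.Nonneg) (hP : IsPoisson μ)
    (ψ : Ed d → ℂ) (hc : Continuous ψ) (hs : HasCompactSupport ψ) :
    (∀ t : Ed d, Summable fun x => μ.mass x * ψ (t - x)) ∧ IsBohrAP (μ.conv ψ) := by
  obtain ⟨-, hT, ν, hν, hF⟩ := hP
  exact (hF.translationBounded hpos hT hν).isBohrAP_conv hT hν hF hc hs

end
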